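/- If an entire function f has at least p ≥ 2 transcendental singularities of f⁻¹ over finite points, then f⁻¹ has at least p transcendental singularities over ∞. Consequently the number of finite asymptotic values of an entire function is at most the number of its direct singularities over ∞, hence at most 2λ(f) when f has lower order λ(f) ≥ 1/2 (assuming the Denjoy–Carleman–Ahlfors theorem). -/

import Mathlib

/-- A transcendental singularity of `f⁻¹` over a finite point `pt`:
a monotone choice `V ↦ S(V)` of connected components of `f⁻¹(V)` over
neighborhoods `V` of `pt`, with empty total intersection. -/
structure TranscSingOverFin (f : ℂ → ℂ) where
  pt : ℂ
  S : Set ℂ → Set ℂ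
  comp : ∀ V : Set ℂ, IsOpen V → pt ∈ V →
    ∃ z ∈ f ⁻¹' V, S V = connectedComponentIn (f ⁻¹' V) z
  mono : ∀ V₁ V₂ : Set ℂ, IsOpen V₁ → pt ∈ V₁ → IsOpen V₂ → pt ∈ V₂ →
    V₁ ⊆ V₂ → S V₁ ⊆ S V₂
  empty : (⋂ V ∈ {V : Set ℂ | IsOpen V ∧ pt ∈ V}, S V) = ∅

/-- A transcendental singularity of `f⁻¹` over `∞` (for `f` entire):
a monotone choice `R ↦ T(R)` of connected components (tracts) of
`{|f| > R}`, with empty total intersection. -/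
structure TranscSingOverInf (f : ℂ → ℂ) where
  T : ℝ → Set ℂ
  comp : ∀ R : ℝ, ∃ z : ℂ, R < ‖f z‖ ∧
    T R = connectedComponentIn {w : ℂ | R < ‖f w‖} z
  mono : ∀ R₁ R₂ : ℝ, R₁ ≤ R₂ → T R₂ ⊆ T R₁
  empty : (⋂ R : ℝ, T R) = ∅

/-- Two singularities over finite points are distinct if they have disjoint
tracts over some pair of neighborhoods. -/
def FinSingDistinct {f : ℂ → ℂ} (σ τ : TranscSingOverFin f) : Prop :=
  ∃ V W : Set ℂ, IsOpen V ∧ σ.pt ∈ V ∧ IsOpen W ∧ τ.pt ∈ W ∧ σ.S V ∩ τ.S W = ∅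

/-- Two singularities over `∞` are distinct if their tracts are eventually
disjoint. -/
def InfSingDistinct {f : ℂ → ℂ} (σ τ : TranscSingOverInf f) : Prop :=
  ∃ R : ℝ, σ.T R ∩ τ.T R = ∅

/-- The lower order of growth of an entire function,
`λ(f) = liminf_{r→∞} log log M(r,f) / log r`. -/
noncomputable def lowerOrder (f : ℂ → ℂ) : ℝ :=
  Filter.liminf
    (fun r : ℝ =>
      Real.log (Real.log (sSup ((fun z => ‖f z‖) '' Metric.sphere (0 : ℂ) r)))
        / Real.log r) Filter.atTop

/-!
Let `a j` be the base points of the given singularities. Outside a tract of the `j`-th one over a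
small disc about `a j` there is, near infinity, a continuous branch `θ j` of the logarithm, because
the tracts over shrinking discs connect a fixed point to infinity. The differences `θ j - θ i` are
constant on every component of `{|f| > R}`, so each of these components carries a vector in `ℂ ^ p`.

These vectors span `ℂ ^ p`. Otherwise a nontrivial combination of the differences and of the
constant `1` vanishes on `{|f| > R}`. Where it does not vanish, `∏ k, (f - a k)` is bounded, and by
a Phragmén–Lindelöf argument (with the bounded comparison function `1 / θ i`) it is small far out;
hence the combination vanishes on the remote part of the boundary of a larger tract. There it allows
`θ j` outside the tract to be continued across it by the other `θ k`, which gives a primitive of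
`1 / z` on a large circle, a contradiction.

So at least `p` components of `{|f| > R}` are distinct. As `f` is unbounded on each of them, each
contains a singularity over infinity.
-/

section

open Set Filter Topology Metric Bornology

section Topology

variable {X : Type*} [TopologicalSpace X]

theorem mem_connectedComponentIn_of_mem_closure {F : Set X} {x y : X} (hx : x ∈ F) (hyF : y ∈ F)
    (hy : y ∈ closure (connectedComponentIn F x)) : y ∈ connectedComponentIn F x := by
  have hpre : IsPreconnected (insert y (connectedComponentIn F x)) :=
    isPreconnected_connectedComponentIn.subset_closure (subset_insert _ _)
      (insert_subset hy subset_closure)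
  exact hpre.subset_connectedComponentIn (mem_insert_of_mem _ (mem_connectedComponentIn hx))
    (insert_subset hyF (connectedComponentIn_subset _ _)) (mem_insert _ _)

theorem eventually_forall_lt_norm_of_lt_norm {E F : Type*} [SeminormedAddCommGroup E]
    [ProperSpace E] [SeminormedAddCommGroup F] {g : E → F} (hg : Continuous g) (K : ℝ) :
    ∀ᶠ M in atTop, ∀ x, M < ‖g x‖ → K < ‖x‖ := by
  obtain ⟨B, hB⟩ := (isCompact_closedBall (0 : E) K).exists_bound_of_continuousOn hg.continuousOn
  filter_upwards [eventually_ge_atTop B] with M hM x hx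
  exact not_le.1 fun hxK => (hM.trans_lt hx).not_ge (hB x (mem_closedBall_zero_iff.2 hxK))

theorem diff_mem_nhds_of_lt_norm {E : Type*} [SeminormedAddCommGroup E] {A : Set E} {ρ : ℝ}
    {x : E} (hx : ρ < ‖x‖) (hxA : x ∉ closure A) : {y | ρ < ‖y‖} \ A ∈ 𝓝 x :=
  inter_mem ((isOpen_lt continuous_const continuous_norm).mem_nhds hx)
    (mem_of_superset (isClosed_closure.isOpen_compl.mem_nhds hxA)
      (compl_subset_compl.2 subset_closure))

end Topology

section LinearAlgebra

theorem nonempty_embedding_of_forall_dotProduct_eq_zero {K ι : Type*} [Field K] [Fintype ι]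
    {s : Set (ι → K)} (h : ∀ m : ι → K, (∀ v ∈ s, m ⬝ᵥ v = 0) → m = 0) : Nonempty (ι ↪ s) := by
  classical
  have hspan : Submodule.span K s = ⊤ := by
    by_contra hne
    obtain ⟨φ, hφ, hle⟩ := Submodule.exists_le_ker_of_lt_top _ (lt_top_iff_ne_top.2 hne)
    obtain ⟨m, rfl⟩ := (dotProductEquiv K ι).surjective φ
    exact hφ (by rw [h m fun v hv => hle (Submodule.subset_span hv), map_zero])
  have hcard := rank_span_le (R := K) s
  rw [hspan, rank_top, ← Module.finrank_eq_rank, Module.finrank_fintype_fun_eq_card] at hcard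
  rwa [← Cardinal.lift_mk_le', Cardinal.mk_fintype, Cardinal.lift_natCast,
    Cardinal.nat_le_lift_iff]

end LinearAlgebra

/-- `θ` is a continuous branch of `log h` on `s`. -/
structure IsLogBranchOn {X : Type*} [TopologicalSpace X] (θ h : X → ℂ) (s : Set X) : Prop where
  continuousOn : ContinuousOn θ s
  exp_eq : ∀ ⦃x⦄, x ∈ s → Complex.exp (θ x) = h x

namespace IsLogBranchOn

section TopologicalSpace

variable {X : Type*} [TopologicalSpace X] {θ θ₁ θ₂ h h₁ h₂ : X → ℂ} {s t : Set X} {x y : X}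

theorem mono (hθ : IsLogBranchOn θ h t) (hst : s ⊆ t) : IsLogBranchOn θ h s :=
  ⟨hθ.continuousOn.mono hst, fun _ hx => hθ.exp_eq (hst hx)⟩

theorem congr_right (hθ : IsLogBranchOn θ h₁ s) (h : EqOn h₁ h₂ s) : IsLogBranchOn θ h₂ s :=
  ⟨hθ.continuousOn, fun _ hx => (hθ.exp_eq hx).trans (h hx)⟩

theorem const {c : ℂ} (hc : c ≠ 0) :
    IsLogBranchOn (fun _ : X => Complex.log c) (fun _ => c) s :=
  ⟨continuousOn_const, fun _ _ => Complex.exp_log hc⟩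

theorem clog (hc : ContinuousOn h s) (hs : ∀ x ∈ s, h x ∈ Complex.slitPlane) :
    IsLogBranchOn (fun x => Complex.log (h x)) h s :=
  ⟨hc.clog hs, fun x hx => Complex.exp_log (Complex.slitPlane_ne_zero (hs x hx))⟩

theorem add (hθ₁ : IsLogBranchOn θ₁ h₁ s) (hθ₂ : IsLogBranchOn θ₂ h₂ s) :
    IsLogBranchOn (fun x => θ₁ x + θ₂ x) (fun x => h₁ x * h₂ x) s :=
  ⟨hθ₁.continuousOn.add hθ₂.continuousOn, fun x hx => by
    rw [Complex.exp_add, hθ₁.exp_eq hx, hθ₂.exp_eq hx]⟩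

theorem neg (hθ : IsLogBranchOn θ h s) : IsLogBranchOn (fun x => -θ x) (fun x => (h x)⁻¹) s :=
  ⟨hθ.continuousOn.neg, fun x hx => by rw [Complex.exp_neg, hθ.exp_eq hx]⟩

theorem sub (hθ₁ : IsLogBranchOn θ₁ h₁ s) (hθ₂ : IsLogBranchOn θ₂ h₂ s) :
    IsLogBranchOn (fun x => θ₁ x - θ₂ x) (fun x => h₁ x / h₂ x) s :=
  ⟨hθ₁.continuousOn.sub hθ₂.continuousOn, fun x hx => by
    rw [Complex.exp_sub, hθ₁.exp_eq hx, hθ₂.exp_eq hx]⟩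

theorem sum_range {a β : ℕ → X → ℂ} (ha : ∀ n, ∀ x ∈ s, a n x ≠ 0)
    (hβ : ∀ n, IsLogBranchOn (β n) (fun x => a n x / a (n + 1) x) s) (N : ℕ) :
    IsLogBranchOn (fun x => ∑ n ∈ Finset.range N, β n x) (fun x => a 0 x / a N x) s := by
  induction N with
  | zero => exact ⟨by simpa using continuousOn_const, fun x hx => by simp [div_self (ha 0 x hx)]⟩
  | succ N ih =>
    simp only [Finset.sum_range_succ]
    exact (ih.add (hβ N)).congr_right fun x hx => div_mul_div_cancel₀ (ha N x hx)

theorem re_eq_log_norm (hθ : IsLogBranchOn θ h s) (hx : x ∈ s) :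
    (θ x).re = Real.log ‖h x‖ := by
  rw [← hθ.exp_eq hx, Complex.norm_exp, Real.log_exp]

theorem eqOn_of_isPreconnected (hθ₁ : IsLogBranchOn θ₁ h s) (hθ₂ : IsLogBranchOn θ₂ h s)
    (hs : IsPreconnected s) (hx : x ∈ s) (heq : θ₁ x = θ₂ x) : EqOn θ₁ θ₂ s :=
  Complex.isCoveringMap_exp.eqOn_of_comp_eqOn hs hθ₁.continuousOn hθ₂.continuousOn
    (fun _ hy => Subtype.ext ((hθ₁.exp_eq hy).trans (hθ₂.exp_eq hy).symm)) hx heq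

theorem sub_eq_sub_of_isPreconnected (hθ₁ : IsLogBranchOn θ₁ h s) (hθ₂ : IsLogBranchOn θ₂ h s)
    (hs : IsPreconnected s) (hx : x ∈ s) (hy : y ∈ s) : θ₁ x - θ₂ x = θ₁ y - θ₂ y := by
  have hshift : IsLogBranchOn (fun z => θ₂ z + (θ₁ y - θ₂ y)) h s := by
    refine ⟨hθ₂.continuousOn.add continuousOn_const, fun z hz => ?_⟩
    rw [Complex.exp_add, Complex.exp_sub, hθ₁.exp_eq hy, ← hθ₂.exp_eq hy,
      div_self (Complex.exp_ne_zero _), mul_one, hθ₂.exp_eq hz]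
  have hxy := hθ₁.eqOn_of_isPreconnected hshift hs hy (by ring) hx
  linear_combination hxy

end TopologicalSpace

variable {θ h : ℂ → ℂ} {h' z : ℂ} {s : Set ℂ}

theorem hasDerivAt (hθ : IsLogBranchOn θ h s) (hs : s ∈ 𝓝 z) (hh : HasDerivAt h h' z) :
    HasDerivAt θ (h' / h z) z := by
  rw [← hθ.exp_eq (mem_of_mem_nhds hs)]
  exact HasDerivAt.of_comp_left (hθ.continuousOn.continuousAt hs) (Complex.hasDerivAt_exp _) hh
    (Complex.exp_ne_zero _) (mem_of_superset hs fun _ hw => hθ.exp_eq hw)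

theorem hasDerivAt_id (hθ : IsLogBranchOn θ id s) (hs : s ∈ 𝓝 z) : HasDerivAt θ z⁻¹ z := by
  simpa using hθ.hasDerivAt hs (_root_.hasDerivAt_id z)

theorem diffContOnCl_id (hθ : IsLogBranchOn θ id (closure s)) (hs : IsOpen s) :
    DiffContOnCl ℂ θ s :=
  ⟨fun _ hz => (hθ.hasDerivAt_id (mem_of_superset (hs.mem_nhds hz) subset_closure)
    ).differentiableAt.differentiableWithinAt, hθ.continuousOn⟩

end IsLogBranchOn

theorem not_eventually_hasDerivAt_inv (L : ℂ → ℂ) :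
    ¬ ∀ᶠ z in cobounded ℂ, HasDerivAt L z⁻¹ z := by
  intro hL
  obtain ⟨ρ₀, -, hρ₀⟩ := hasBasis_cobounded_norm.eventually_iff.1 hL
  obtain ⟨ρ, hρ₀ρ, hρ⟩ := ((eventually_ge_atTop ρ₀).and (eventually_gt_atTop 0)).exists
  have hzero := circleIntegral.integral_eq_zero_of_hasDerivWithinAt (c := 0) hρ.le fun z hz =>
    (hρ₀ (hρ₀ρ.trans_eq (mem_sphere_zero_iff_norm.1 hz).symm)).hasDerivWithinAt
  have htwo := circleIntegral.integral_sub_center_inv 0 hρ.ne'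
  simp only [sub_zero, hzero] at htwo
  exact Complex.two_pi_I_ne_zero htwo.symm

theorem hasDerivAt_piecewise {U : Set ℂ} [DecidablePred (· ∈ U)] {α β : ℂ → ℂ} {d z : ℂ}
    (hU : IsOpen U) (hα : z ∈ U → HasDerivAt α d z) (hβ : z ∉ U → HasDerivAt β d z)
    (hαβ : z ∈ frontier U → α =ᶠ[𝓝 z] β) : HasDerivAt (U.piecewise α β) d z := by
  by_cases hzU : z ∈ U
  · exact (hα hzU).congr_of_eventuallyEq
      (mem_of_superset (hU.mem_nhds hzU) fun y hy => piecewise_eq_of_mem U α β hy)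
  · refine (hβ hzU).congr_of_eventuallyEq ?_
    by_cases hzc : z ∈ closure U
    · filter_upwards [hαβ (hU.frontier_eq ▸ ⟨hzc, hzU⟩)] with y hy
      by_cases hyU : y ∈ U <;> simp [hyU, hy]
    · filter_upwards [isClosed_closure.isOpen_compl.mem_nhds hzc] with y hy
      exact piecewise_eq_of_notMem U α β fun h => hy (subset_closure h)

section PhragmenLindelof

theorem norm_le_of_bounded_of_forall_mem_frontier {D : Set ℂ} {c : ℂ} {ρ M ε : ℝ} (hρ : 0 < ρ)
    (hε : 0 < ε) (hDρ : ∀ z ∈ D, ρ ≤ ‖z - c‖) {g : ℂ → ℂ} (hg : DiffContOnCl ℂ g D)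
    (hM : ∀ z ∈ D, ‖g z‖ ≤ M) (hfr : ∀ z ∈ frontier D, ‖g z‖ ≤ ε) {z : ℂ} (hz : z ∈ D) :
    ‖g z‖ ≤ ε := by
  have hclρ : ∀ w ∈ closure D, ρ ≤ ‖w - c‖ :=
    le_on_closure hDρ continuousOn_const (by fun_prop)
  have hclM : ∀ w ∈ closure D, ‖g w‖ ≤ M :=
    le_on_closure hM hg.continuousOn.norm continuousOn_const
  have hinv : DiffContOnCl ℂ (fun w => (w - c)⁻¹) D :=
    (differentiable_id.sub_const c).diffContOnCl.inv fun w hw =>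
      norm_pos_iff.1 (hρ.trans_le (hclρ w hw))
  -- The maximum principle for `gⁿ / (w - c)`, which is small on large circles.
  have hpow : ∀ n : ℕ, ‖g z‖ ^ n * ‖z - c‖⁻¹ ≤ ε ^ n * ρ⁻¹ := by
    intro n
    obtain ⟨N, hzN, hMN⟩ : ∃ N : ℝ, ‖z - c‖ < N ∧ M ^ n * N⁻¹ ≤ ε ^ n * ρ⁻¹ :=
      ((eventually_gt_atTop _).and ((tendsto_inv_atTop_zero.const_mul (M ^ n)).eventually_le_const
        (by rw [mul_zero]; positivity))).exists
    have hdiff : DiffContOnCl ℂ (fun w => g w ^ n * (w - c)⁻¹) (D ∩ ball c N) :=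
      (((differentiable_pow n).comp_diffContOnCl hg).smul hinv).mono inter_subset_left
    have hmax := Complex.norm_le_of_forall_mem_frontier_norm_le
      (isBounded_ball.subset inter_subset_right) hdiff (C := ε ^ n * ρ⁻¹) ?_
      (subset_closure ⟨hz, by rwa [mem_ball, dist_eq_norm]⟩)
    · rwa [norm_mul, norm_pow, norm_inv] at hmax
    intro w hw
    rw [norm_mul, norm_pow, norm_inv]
    rcases frontier_inter_subset _ _ hw with ⟨hwD, -⟩ | ⟨hwD, hwN⟩
    · gcongr
      · exact hfr w hwD
      · exact hclρ w (frontier_subset_closure hwD)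
    · rw [mem_sphere_iff_norm.1 (frontier_ball_subset_sphere hwN)]
      refine le_trans ?_ hMN
      have := (norm_nonneg _).trans_lt hzN
      gcongr
      exact hclM w hwD
  by_contra! hlt
  have hz0 : 0 < ‖z - c‖ := hρ.trans_le (hDρ z hz)
  obtain ⟨n, hn⟩ := pow_unbounded_of_one_lt (‖z - c‖ * ρ⁻¹) ((one_lt_div hε).2 hlt)
  have hn' := hpow n
  rw [mul_inv_le_iff₀ hz0, mul_right_comm, mul_assoc, ← div_le_iff₀' (by positivity),
    ← div_pow] at hn'
  linarith

-- The weight `exp (-C u)` is at most one in norm, tends to one at infinity, and is as small as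
-- desired on `K` once `C` is large.
theorem eventually_norm_lt_of_re_pos {D K : Set ℂ} {c : ℂ} {ρ M ε ε' : ℝ} (hρ : 0 < ρ)
    (hε : 0 < ε) (hεε' : ε < ε') (hDρ : ∀ z ∈ D, ρ ≤ ‖z - c‖) {g u : ℂ → ℂ}
    (hg : DiffContOnCl ℂ g D) (hu : DiffContOnCl ℂ u D) (hu0 : ∀ z ∈ closure D, 0 < (u z).re)
    (hulim : Tendsto (fun z => (u z).re) (cobounded ℂ ⊓ 𝓟 D) (𝓝 0)) (hM : ∀ z ∈ D, ‖g z‖ ≤ M)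
    (hK : IsCompact K) (hfr : ∀ z ∈ frontier D, z ∈ K ∨ ‖g z‖ ≤ ε) :
    ∀ᶠ z in cobounded ℂ ⊓ 𝓟 D, ‖g z‖ < ε' := by
  have hclM : ∀ z ∈ closure D, ‖g z‖ ≤ M :=
    le_on_closure hM hg.continuousOn.norm continuousOn_const
  obtain ⟨δ, hδ, hδle⟩ : ∃ δ, 0 < δ ∧ ∀ z ∈ closure D ∩ K, δ ≤ (u z).re :=
    (hK.inter_left isClosed_closure).exists_forall_le' (Complex.continuous_re.comp_continuousOn
      (hu.continuousOn.mono inter_subset_left)) fun z hz => hu0 z hz.1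
  obtain ⟨C, hC, hCM⟩ : ∃ C : ℝ, 0 < C ∧ M * Real.exp (-(C * δ)) ≤ ε :=
    ((eventually_gt_atTop 0).and (((Real.tendsto_exp_neg_atTop_nhds_zero.comp
      (tendsto_id.atTop_mul_const hδ)).const_mul M).eventually_le_const (by simpa))).exists
  have hweight : DiffContOnCl ℂ (fun z => g z * Complex.exp (-(C * u z))) D :=
    hg.smul (Complex.differentiable_exp.comp_diffContOnCl (hu.const_smul (C : ℂ)).neg)
  have hnorm : ∀ z, ‖g z * Complex.exp (-(C * u z))‖ = ‖g z‖ * Real.exp (-(C * (u z).re)) :=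
    fun z => by rw [norm_mul, Complex.norm_exp, Complex.neg_re, Complex.re_ofReal_mul]
  have hle : ∀ z ∈ closure D, ‖g z‖ * Real.exp (-(C * (u z).re)) ≤ ‖g z‖ := fun z hz =>
    mul_le_of_le_one_right (norm_nonneg _)
      (Real.exp_le_one_iff.2 (neg_nonpos.2 (mul_pos hC (hu0 z hz)).le))
  have hfrontier : ∀ z ∈ frontier D, ‖g z * Complex.exp (-(C * u z))‖ ≤ ε := by
    intro z hz
    have hzD := frontier_subset_closure hz
    rw [hnorm]
    refine (hfr z hz).elim (fun hzK => le_trans ?_ hCM) (hle z hzD).trans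
    have := (norm_nonneg _).trans (hclM z hzD)
    gcongr
    exacts [hclM z hzD, hδle z ⟨hzD, hzK⟩]
  have hlim : Tendsto (fun z => ε * Real.exp (C * (u z).re)) (cobounded ℂ ⊓ 𝓟 D) (𝓝 ε) := by
    simpa using ((hulim.const_mul C).rexp).const_mul ε
  filter_upwards [hlim.eventually_lt_const hεε', mem_inf_of_right (mem_principal_self D)]
    with z hz hzD
  have hbound := norm_le_of_bounded_of_forall_mem_frontier hρ hε hDρ hweight
    (fun w hw => (hnorm w).trans_le ((hle w (subset_closure hw)).trans (hM w hw))) hfrontier hzD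
  rw [hnorm, Real.exp_neg, mul_inv_le_iff₀ (Real.exp_pos _)] at hbound
  exact hbound.trans_lt hz

theorem eventually_norm_lt_of_isLogBranchOn {D : Set ℂ} (hD : IsOpen D) {ρ M ε ε' : ℝ}
    (hρ : 1 < ρ) (hε : 0 < ε) (hεε' : ε < ε') (hDρ : ∀ z ∈ D, ρ ≤ ‖z‖) {g θ : ℂ → ℂ}
    (hθ : IsLogBranchOn θ id (closure D)) (hg : DiffContOnCl ℂ g D) (hM : ∀ z ∈ D, ‖g z‖ ≤ M)
    (hfr : ∀ z ∈ frontier D, ‖z‖ = ρ ∨ ‖g z‖ ≤ ε) :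
    ∀ᶠ z in cobounded ℂ ⊓ 𝓟 D, ‖g z‖ < ε' := by
  have hre : ∀ z ∈ closure D, (θ z).re = Real.log ‖z‖ := fun z hz => hθ.re_eq_log_norm hz
  have hre_pos : ∀ z ∈ closure D, 0 < (θ z).re := fun z hz => by
    rw [hre z hz]
    exact Real.log_pos (hρ.trans_le (le_on_closure hDρ continuousOn_const (by fun_prop) hz))
  have hθne : ∀ z ∈ closure D, θ z ≠ 0 := fun z hz h0 => by simpa [h0] using hre_pos z hz
  have hinv_pos : ∀ z ∈ closure D, 0 < (θ z)⁻¹.re := fun z hz => by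
    rw [Complex.inv_re]
    exact div_pos (hre_pos z hz) (Complex.normSq_pos.2 (hθne z hz))
  have hlim : Tendsto (fun z => (θ z)⁻¹.re) (cobounded ℂ ⊓ 𝓟 D) (𝓝 0) := by
    have hloginv : Tendsto (fun z : ℂ => (Real.log ‖z‖)⁻¹) (cobounded ℂ ⊓ 𝓟 D) (𝓝 0) :=
      ((tendsto_inv_atTop_zero.comp Real.tendsto_log_atTop).comp
        (tendsto_norm_cobounded_atTop (E := ℂ))).mono_left inf_le_left
    refine squeeze_zero_norm' (mem_inf_of_right fun z hz => ?_) hloginv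
    have hzc := subset_closure hz
    calc ‖(θ z)⁻¹.re‖ ≤ ‖(θ z)⁻¹‖ := Complex.abs_re_le_norm _
      _ = ‖θ z‖⁻¹ := norm_inv _
      _ ≤ (Real.log ‖z‖)⁻¹ := by
        rw [← hre z hzc]
        exact inv_anti₀ (hre_pos z hzc) (Complex.re_le_norm _)
  exact eventually_norm_lt_of_re_pos (c := 0) (zero_lt_one.trans hρ) hε hεε' (by simpa) hg
    ((hθ.diffContOnCl_id hD).inv hθne) hinv_pos hlim hM (isCompact_sphere 0 ρ) (by simpa)

theorem eventually_eq_zero_of_le_norm {E : Type*} [Zero E] {P θ : ℂ → ℂ} {ψ : ℂ → E}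
    {ρ M ε ε' : ℝ} (hP : Differentiable ℂ P) (hε : 0 < ε) (hεε' : ε < ε')
    (hθ : IsLogBranchOn θ id {z | ρ < ‖z‖ ∧ ε ≤ ‖P z‖})
    (hψ : ∀ z, ρ < ‖z‖ → ε ≤ ‖P z‖ → ∀ᶠ w in 𝓝 z, ψ w = ψ z) (hM : ∀ z, M < ‖P z‖ → ψ z = 0) :
    ∀ᶠ z in cobounded ℂ, ε' ≤ ‖P z‖ → ψ z = 0 := by
  obtain ⟨ρ', hρρ', hρ'⟩ : ∃ ρ', ρ < ρ' ∧ 1 < ρ' :=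
    ((eventually_gt_atTop ρ).and (eventually_gt_atTop 1)).exists
  set D : Set ℂ := {z | ρ' < ‖z‖ ∧ ε < ‖P z‖ ∧ ψ z ≠ 0}
  have hPc : Continuous P := hP.continuous
  have hD : IsOpen D := isOpen_iff_eventually.2 fun z ⟨hzρ, hzε, hzψ⟩ => by
    filter_upwards [continuous_norm.continuousAt.eventually_const_lt hzρ,
      hPc.norm.continuousAt.eventually_const_lt hzε, hψ z (hρρ'.trans hzρ) hzε.le] with w h1 h2 h3
    exact ⟨h1, h2, h3 ▸ hzψ⟩
  have hDρ : ∀ z ∈ D, ρ' ≤ ‖z‖ := fun z hz => hz.1.le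
  have hclρ : ∀ z ∈ closure D, ρ' ≤ ‖z‖ := le_on_closure hDρ continuousOn_const (by fun_prop)
  have hclε : ∀ z ∈ closure D, ε ≤ ‖P z‖ :=
    le_on_closure (fun z hz => hz.2.1.le) continuousOn_const (by fun_prop)
  have hfr : ∀ z ∈ frontier D, ‖z‖ = ρ' ∨ ‖P z‖ ≤ ε := by
    rw [hD.frontier_eq]
    rintro z ⟨hzc, hzD⟩
    by_contra! hz
    have hρz := (hclρ z hzc).lt_of_ne' hz.1
    have hψz : ∃ᶠ w in 𝓝 z, ψ w ≠ 0 := (mem_closure_iff_frequently.1 hzc).mono fun w hw => hw.2.2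
    obtain ⟨w, hw, hwz⟩ := (hψz.and_eventually (hψ z (hρρ'.trans hρz) hz.2.le)).exists
    exact hzD ⟨hρz, hz.2, hwz ▸ hw⟩
  have hθD := hθ.mono (s := closure D) fun z hz => ⟨hρρ'.trans_le (hclρ z hz), hclε z hz⟩
  have hlt := eventually_norm_lt_of_isLogBranchOn hD hρ' hε hεε' hDρ hθD hP.diffContOnCl
    (fun z hz => not_lt.1 fun h => hz.2.2 (hM z h)) hfr
  filter_upwards [eventually_inf_principal.1 hlt,
    tendsto_norm_cobounded_atTop.eventually_gt_atTop ρ'] with z hz hzρ hzP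
  by_contra hψz
  exact (hz ⟨hzρ, hεε'.trans_le hzP, hψz⟩).not_ge hzP

end PhragmenLindelof

section LogDiff

variable {ι X : Type*}

/-- The vector of differences between branches `θ j` of the logarithm and the branch `θ i`,
shifted so that its `i`-th coordinate is constantly `1`. With this normalization the affine
relations between the differences are the linear relations between the coordinates. -/
def logDiff (θ : ι → X → ℂ) (i : ι) (x : X) : ι → ℂ :=
  fun j => θ j x - θ i x + 1

theorem logDiff_eq_of_isPreconnected [TopologicalSpace X] {θ : ι → X → ℂ} {h : X → ℂ}
    {s : Set X} {x y : X} (hθ : ∀ j, IsLogBranchOn (θ j) h s) (hs : IsPreconnected s) (hx : x ∈ s)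
    (hy : y ∈ s) (i : ι) : logDiff θ i x = logDiff θ i y :=
  funext fun j => by
    rw [logDiff, logDiff, (hθ j).sub_eq_sub_of_isPreconnected (hθ i) hs hx hy]

theorem eventually_logDiff_eq [Finite ι] [TopologicalSpace X] [LocallyConnectedSpace X]
    {θ : ι → X → ℂ} {h : X → ℂ} {s : ι → Set X} {x : X}
    (hθ : ∀ j, IsLogBranchOn (θ j) h (s j)) (hs : ∀ j, s j ∈ 𝓝 x) (i : ι) :
    ∀ᶠ y in 𝓝 x, logDiff θ i y = logDiff θ i x := by
  have hnhds : ⋂ j, s j ∈ 𝓝 x := iInter_mem.2 hs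
  filter_upwards [connectedComponentIn_mem_nhds hnhds] with y hy
  exact logDiff_eq_of_isPreconnected
    (fun j => (hθ j).mono ((connectedComponentIn_subset _ _).trans (iInter_subset s j)))
    isPreconnected_connectedComponentIn hy (mem_connectedComponentIn (mem_of_mem_nhds hnhds)) i

theorem hasDerivAt_sub_dotProduct_logDiff [Fintype ι] {θ : ι → ℂ → ℂ} {m : ι → ℂ} {i j : ι}
    {d z : ℂ} (hij : i ≠ j) (hmj : m j ≠ 0) (hθ : ∀ k ≠ j, HasDerivAt (θ k) d z) :
    HasDerivAt (fun z => θ j z - (m j)⁻¹ * m ⬝ᵥ logDiff θ i z) d z := by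
  classical
  have hsum : HasDerivAt (fun z => ∑ k ∈ Finset.univ.erase j, m k * logDiff θ i z k)
      (∑ k ∈ Finset.univ.erase j, m k * (d - d)) z :=
    .fun_sum fun k hk =>
      (((hθ k (Finset.ne_of_mem_erase hk)).sub (hθ i hij)).add_const 1).const_mul (m k)
  simp only [sub_self, mul_zero, Finset.sum_const_zero] at hsum
  have heq : (fun z => θ j z - (m j)⁻¹ * m ⬝ᵥ logDiff θ i z) =
      fun z => θ i z - 1 - (m j)⁻¹ * ∑ k ∈ Finset.univ.erase j, m k * logDiff θ i z k := by
    funext z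
    rw [dotProduct, ← Finset.add_sum_erase _ _ (Finset.mem_univ j), mul_add,
      inv_mul_cancel_left₀ hmj, logDiff]
    ring
  rw [heq]
  simpa only [mul_zero, sub_zero] using
    ((hθ i hij).sub_const 1).fun_sub (hsum.const_mul (m j)⁻¹)

end LogDiff

section LogBranch

theorem exists_isLogBranchOn_of_monotone {X : Type*} [TopologicalSpace X] {h : X → ℂ} {s : Set X}
    {V : ℕ → Set X} (hVo : ∀ n, IsOpen (V n)) (hV : Monotone V) (hsV : ∀ x ∈ s, ∃ n, x ∈ V n)
    {Θ : ℕ → X → ℂ} (hΘ : ∀ n, IsLogBranchOn (Θ n) h (s ∩ V n))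
    (hstep : ∀ n, EqOn (Θ (n + 1)) (Θ n) (s ∩ V n)) : ∃ θ, IsLogBranchOn θ h s := by
  have hmono : ∀ m n, m ≤ n → EqOn (Θ n) (Θ m) (s ∩ V m) := fun m n hmn => by
    induction n, hmn using Nat.le_induction with
    | base => exact eqOn_refl _ _
    | succ n hmn ih => exact ((hstep n).mono (inter_subset_inter_right s (hV hmn))).trans ih
  choose! k hk using hsV
  have heq : ∀ n, EqOn (fun x => Θ (k x) x) (Θ n) (s ∩ V n) := fun n x ⟨hxs, hxn⟩ =>
    (le_total n (k x)).elim (fun h => hmono _ _ h ⟨hxs, hxn⟩)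
      fun h => (hmono _ _ h ⟨hxs, hk x hxs⟩).symm
  refine ⟨fun x => Θ (k x) x, fun x hx => ?_, fun x hx => (hΘ (k x)).exp_eq ⟨hx, hk x hx⟩⟩
  have hcont := (((hΘ (k x)).continuousOn.congr (heq (k x))) x ⟨hx, hk x hx⟩)
  exact (continuousWithinAt_inter ((hVo _).mem_nhds (hk x hx))).1 hcont

theorem one_sub_div_mem_slitPlane {z w : ℂ} (h : ‖z‖ < ‖w‖) : 1 - z / w ∈ Complex.slitPlane := by
  rw [sub_eq_add_neg]
  refine Complex.mem_slitPlane_of_norm_lt_one ?_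
  rwa [norm_neg, norm_div, div_lt_one ((norm_nonneg _).trans_lt h)]

theorem isLogBranchOn_log_one_sub_div {w : ℂ} {r : ℝ} (h : r ≤ ‖w‖) :
    IsLogBranchOn (fun z => Complex.log (1 - z / w)) (fun z => 1 - z / w) (ball 0 r) :=
  .clog (by fun_prop) fun _ hz => one_sub_div_mem_slitPlane ((mem_ball_zero_iff.1 hz).trans_le h)

variable {U : Set ℂ} {w w' : ℂ}

theorem exists_isLogBranchOn_sub_div_sub (hU : IsOpen U) (hU' : IsPreconnected U) (hw : w ∈ U)
    (hw' : w' ∈ U) : ∃ β, IsLogBranchOn β (fun z => (z - w) / (z - w')) Uᶜ := by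
  have hne : ∀ x ∈ U, ∀ z ∈ Uᶜ, z - x ≠ 0 := fun x hx z hz => sub_ne_zero.2 fun h => hz (h ▸ hx)
  refine hU'.induction₂ (fun w w' => ∃ β, IsLogBranchOn β (fun z => (z - w) / (z - w')) Uᶜ)
    (fun x hx => ?_) (fun _ y _ _ hy _ ⟨β, hβ⟩ ⟨γ, hγ⟩ => ⟨_, (hβ.add hγ).congr_right
      fun t ht => div_mul_div_cancel₀ (hne y hy t ht)⟩)
    (fun x y _ _ ⟨β, hβ⟩ => ⟨_, hβ.neg.congr_right fun _ _ => inv_div _ _⟩) hw hw'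
  obtain ⟨δ, hδ, hball⟩ := Metric.isOpen_iff.1 hU x hx
  filter_upwards [mem_nhdsWithin_of_mem_nhds (ball_mem_nhds x hδ)] with y hy
  have hclog : IsLogBranchOn (fun z => Complex.log ((z - y) / (z - x)))
      (fun z => (z - y) / (z - x)) Uᶜ := by
    refine .clog (continuousOn_of_forall_continuousAt fun z hz => ?_) fun z hz => ?_
    · have := hne x hx z hz
      fun_prop (disch := assumption)
    · have hzx : δ ≤ ‖z - x‖ := not_lt.1 fun h => hz (hball (mem_ball_iff_norm.2 h))
      have := one_sub_div_mem_slitPlane ((mem_ball_iff_norm.1 hy).trans_le hzx)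
      rwa [one_sub_div (hne x hx z hz), sub_sub_sub_cancel_right] at this
  exact ⟨_, hclog.neg.congr_right fun _ _ => inv_div _ _⟩

theorem exists_isLogBranchOn_one_sub_div_one_sub (hU : IsOpen U) (hU' : IsPreconnected U)
    (h0 : 0 ∉ U) (hw : w ∈ U) (hw' : w' ∈ U) :
    ∃ β, β 0 = 0 ∧ IsLogBranchOn β (fun z => (1 - z / w) / (1 - z / w')) Uᶜ := by
  obtain ⟨β, hβ⟩ := exists_isLogBranchOn_sub_div_sub hU hU' hw hw'
  have hw0 : w ≠ 0 := fun h => h0 (h ▸ hw)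
  have hw0' : w' ≠ 0 := fun h => h0 (h ▸ hw')
  refine ⟨fun z => β z - β 0, sub_self _, hβ.continuousOn.sub continuousOn_const, fun z hz => ?_⟩
  have hz' : z - w' ≠ 0 := sub_ne_zero.2 fun h => hz (h ▸ hw')
  have hz'' : w' - z ≠ 0 := by rwa [← neg_sub, neg_ne_zero]
  rw [Complex.exp_sub, hβ.exp_eq hz, hβ.exp_eq h0, one_sub_div hw0, one_sub_div hw0']
  field_simp
  ring

-- Telescoping: `1 - z / w 0` is a product of quotients `(1 - z / w n) / (1 - z / w (n + 1))`, which
-- have logarithms off the connected sets `B n`, and of a factor `1 - z / w N`, which has one for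
-- `‖z‖ < N`.
theorem exists_isLogBranchOn_one_sub_div {B : ℕ → Set ℂ} (hBo : ∀ n, IsOpen (B n))
    (hBp : ∀ n, IsPreconnected (B n)) (hBne : ∀ n, (B n).Nonempty) (hB : Antitone B)
    (hBn : ∀ n, ∀ z ∈ B n, n < ‖z‖) : ∃ w ∈ B 0, ∃ θ, IsLogBranchOn θ (1 - · / w) (B 0)ᶜ := by
  choose w hw using hBne
  have hwn : ∀ n : ℕ, (n : ℝ) < ‖w n‖ := fun n => hBn n _ (hw n)
  have hw0 : ∀ n, w n ≠ 0 := fun n => norm_pos_iff.1 ((Nat.cast_nonneg n).trans_lt (hwn n))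
  have hne : ∀ n, ∀ z ∈ (B 0)ᶜ, 1 - z / w n ≠ 0 := fun n z hz h => hz <| by
    rw [(div_eq_one_iff_eq (hw0 n)).1 (sub_eq_zero.1 h).symm]
    exact hB (Nat.zero_le n) (hw n)
  choose β hβ0 hβ using fun n => exists_isLogBranchOn_one_sub_div_one_sub (hBo n) (hBp n)
    (fun h => (hBn n 0 h).not_ge (by simp)) (hw n) (hB n.le_succ (hw (n + 1)))
  have hsum := IsLogBranchOn.sum_range hne fun n =>
    (hβ n).mono (compl_subset_compl.2 (hB (Nat.zero_le n)))
  refine ⟨w 0, hw 0, exists_isLogBranchOn_of_monotone (V := fun n => ball 0 n)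
    (fun n => isOpen_ball) (fun m n h => ball_subset_ball (by exact_mod_cast h))
    (fun z _ => by simpa using exists_nat_gt ‖z‖)
    (Θ := fun N z => ∑ n ∈ Finset.range N, β n z + Complex.log (1 - z / w N))
    (fun N => (((hsum N).mono inter_subset_left).add
      ((isLogBranchOn_log_one_sub_div (hwn N).le).mono inter_subset_right)).congr_right
      fun z hz => div_mul_cancel₀ _ (hne N z hz.1)) fun N z hz => ?_⟩
  have hball : ball (0 : ℂ) N ⊆ (B N)ᶜ := fun y hy hyB =>
    (hBn N y hyB).not_ge (mem_ball_zero_iff.1 hy).le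
  have hN : (N : ℝ) ≤ ‖w (N + 1)‖ := by
    have := hwn (N + 1)
    push_cast at this
    linarith
  have hstep := (((hβ N).mono hball).add (isLogBranchOn_log_one_sub_div hN)).congr_right
    (h₂ := fun y => 1 - y / w N) fun y hy => div_mul_cancel₀ _ <| Complex.slitPlane_ne_zero <|
      one_sub_div_mem_slitPlane ((mem_ball_zero_iff.1 hy).trans_le hN)
  have hlog := hstep.eqOn_of_isPreconnected (isLogBranchOn_log_one_sub_div (hwn N).le)
    (convex_ball _ _).isPreconnected (x := 0)
    (mem_ball_self ((norm_nonneg z).trans_lt (mem_ball_zero_iff.1 hz.2))) (by simp [hβ0]) hz.2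
  simp only [Finset.sum_range_succ, add_assoc, hlog]

end LogBranch

section SingularityOverInf

variable {f : ℂ → ℂ} {R : ℝ} {z : ℂ}

theorem exists_norm_lt_of_forall_exists_lt_norm (hf : Differentiable ℂ f)
    (hub : ∀ R : ℝ, ∃ z, R < ‖f z‖) (hR : 0 < R) : ∃ c, ‖f c‖ < R := by
  by_contra! hle
  have hinv : Differentiable ℂ fun z => (f z)⁻¹ :=
    hf.inv fun z => norm_pos_iff.1 (hR.trans_le (hle z))
  have hbdd : IsBounded (range fun z => (f z)⁻¹) := by
    refine isBounded_iff_forall_norm_le.2 ⟨R⁻¹, forall_mem_range.2 fun z => ?_⟩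
    rw [norm_inv]
    exact inv_anti₀ hR (hle z)
  obtain ⟨y, hy⟩ := hub ‖f 0‖
  rw [inv_injective (hinv.apply_eq_apply_of_bounded hbdd 0 y)] at hy
  exact hy.false

theorem exists_mem_connectedComponentIn_lt_norm (hf : Differentiable ℂ f)
    (hub : ∀ R : ℝ, ∃ z, R < ‖f z‖) (hR : 0 < R) (hz : R < ‖f z‖) (R' : ℝ) :
    ∃ z' ∈ connectedComponentIn {w | R < ‖f w‖} z, R' < ‖f z'‖ := by
  by_contra! hbdd
  have hopen : IsOpen {w | R < ‖f w‖} := isOpen_lt continuous_const hf.continuous.norm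
  have hsub := connectedComponentIn_subset {w | R < ‖f w‖} z
  obtain ⟨c, hc⟩ := exists_norm_lt_of_forall_exists_lt_norm hf hub hR
  obtain ⟨ρ, hρ, hball⟩ := Metric.isOpen_iff.1 (isOpen_lt hf.continuous.norm continuous_const) c hc
  refine hz.not_ge (norm_le_of_bounded_of_forall_mem_frontier (c := c) hρ hR (fun y hy => ?_)
    hf.diffContOnCl hbdd (fun y hy => ?_) (mem_connectedComponentIn hz))
  · by_contra! h
    have hyR : ‖f y‖ < R := hball (mem_ball_iff_norm.2 h)
    exact hyR.not_gt (hsub hy)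
  · rw [hopen.connectedComponentIn.frontier_eq] at hy
    exact not_lt.1 fun h => hy.2 (mem_connectedComponentIn_of_mem_closure hz h hy.1)

theorem exists_seq_mem_connectedComponentIn_lt_norm (hf : Differentiable ℂ f)
    (hub : ∀ R : ℝ, ∃ z, R < ‖f z‖) (hR : 0 < R) (hz : R < ‖f z‖) :
    ∃ s : ℕ → ℂ, s 0 = z ∧ ∀ n : ℕ, R + n < ‖f (s n)‖ ∧
      s (n + 1) ∈ connectedComponentIn {w | R + n < ‖f w‖} (s n) := by
  have hstep : ∀ (n : ℕ) (y : ℂ), R + n < ‖f y‖ → ∃ y' ∈ connectedComponentIn {w | R + n < ‖f w‖} y,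
      R + (n + 1 : ℕ) < ‖f y'‖ := fun n y hy =>
    exists_mem_connectedComponentIn_lt_norm hf hub (by positivity) hy _
  choose! φ hφ_mem hφ_lt using hstep
  let s : ℕ → ℂ := fun n => n.rec z φ
  have hs : ∀ n : ℕ, R + n < ‖f (s n)‖ := fun n => by
    induction n with
    | zero => simpa [s] using hz
    | succ n ih => exact hφ_lt n (s n) ih
  exact ⟨s, rfl, fun n => ⟨hs n, hφ_mem n (s n) (hs n)⟩⟩

theorem exists_transcSingOverInf_T_eq (hf : Differentiable ℂ f)
    (hub : ∀ R : ℝ, ∃ z, R < ‖f z‖) (hR : 0 < R) (hz : R < ‖f z‖) :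
    ∃ τ : TranscSingOverInf f, τ.T R = connectedComponentIn {w | R < ‖f w‖} z := by
  obtain ⟨s, hs0, hs⟩ := exists_seq_mem_connectedComponentIn_lt_norm hf hub hR hz
  have hle : ∀ R', R' ≤ R + ⌈R' - R⌉₊ := fun R' => sub_le_iff_le_add'.1 (Nat.le_ceil _)
  have heq : ∀ R' : ℝ, ∀ n ≥ ⌈R' - R⌉₊, connectedComponentIn {w | R' < ‖f w‖} (s n) =
      connectedComponentIn {w | R' < ‖f w‖} (s ⌈R' - R⌉₊) := by
    intro R' n hn
    induction n, hn using Nat.le_induction with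
    | base => rfl
    | succ n hn ih =>
      have hR'n : R' ≤ R + n := sub_le_iff_le_add'.1 (Nat.ceil_le.1 hn)
      rw [← ih]
      exact (connectedComponentIn_eq
        (connectedComponentIn_mono _ (fun w hw => hR'n.trans_lt hw) (hs n).2)).symm
  refine ⟨⟨fun R' => connectedComponentIn {w | R' < ‖f w‖} (s ⌈R' - R⌉₊),
    fun R' => ⟨_, (hle R').trans_lt (hs _).1, rfl⟩, fun R₁ R₂ h => ?_, ?_⟩, by simp [hs0]⟩
  · rw [← heq R₁ _ (Nat.ceil_mono (sub_le_sub_right h R))]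
    exact connectedComponentIn_mono _ fun w hw => h.trans_lt hw
  · refine eq_empty_iff_forall_notMem.2 fun y hy => ?_
    have hyy : ‖f y‖ < ‖f y‖ := (connectedComponentIn_subset _ _ (mem_iInter.1 hy ‖f y‖) :)
    exact hyy.false

end SingularityOverInf

namespace TranscSingOverFin

variable {f : ℂ → ℂ} {r s : ℝ} {z : ℂ} {V : Set ℂ} (σ : TranscSingOverFin f)

/-- The tract of a singularity over the disc of radius `r` around its base point. It is a component
of the preimage of that disc only for `0 < r`. -/
def tract (r : ℝ) : Set ℂ :=
  σ.S (ball σ.pt r)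

theorem exists_tract_eq (hr : 0 < r) :
    ∃ z ∈ f ⁻¹' ball σ.pt r, σ.tract r = connectedComponentIn (f ⁻¹' ball σ.pt r) z :=
  σ.comp _ isOpen_ball (mem_ball_self hr)

theorem isOpen_tract (hf : Continuous f) (hr : 0 < r) : IsOpen (σ.tract r) := by
  obtain ⟨z, -, hz⟩ := σ.exists_tract_eq hr
  exact hz ▸ (isOpen_ball.preimage hf).connectedComponentIn

theorem isPreconnected_tract (hr : 0 < r) : IsPreconnected (σ.tract r) := by
  obtain ⟨z, -, hz⟩ := σ.exists_tract_eq hr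
  exact hz ▸ isPreconnected_connectedComponentIn

theorem tract_nonempty (hr : 0 < r) : (σ.tract r).Nonempty := by
  obtain ⟨z, hzmem, hz⟩ := σ.exists_tract_eq hr
  exact ⟨z, hz ▸ mem_connectedComponentIn hzmem⟩

theorem tract_subset_S (hr : 0 < r) (hV : IsOpen V) (hrV : ball σ.pt r ⊆ V) : σ.tract r ⊆ σ.S V :=
  σ.mono _ _ isOpen_ball (mem_ball_self hr) hV (hrV (mem_ball_self hr)) hrV

theorem tract_subset_tract (hr : 0 < r) (hrs : r ≤ s) : σ.tract r ⊆ σ.tract s :=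
  σ.tract_subset_S hr isOpen_ball (ball_subset_ball hrs)

variable {σ}

theorem dist_lt_of_mem_tract (hr : 0 < r) (hz : z ∈ σ.tract r) : dist (f z) σ.pt < r := by
  obtain ⟨x, -, hx⟩ := σ.exists_tract_eq hr
  rw [hx] at hz
  exact (connectedComponentIn_subset _ _ hz :)

theorem dist_le_of_mem_closure_tract (hf : Continuous f) (hr : 0 < r)
    (hz : z ∈ closure (σ.tract r)) : dist (f z) σ.pt ≤ r :=
  le_on_closure (f := fun z => dist (f z) σ.pt) (fun _ hx => (dist_lt_of_mem_tract hr hx).le)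
    (by fun_prop) continuousOn_const hz

theorem mem_S_of_mem_closure (hV : IsOpen V) (hσV : σ.pt ∈ V) (hz : z ∈ closure (σ.S V))
    (hzV : f z ∈ V) : z ∈ σ.S V := by
  obtain ⟨x, hx, hS⟩ := σ.comp V hV hσV
  rw [hS] at hz ⊢
  exact mem_connectedComponentIn_of_mem_closure hx hzV hz

theorem dist_eq_of_mem_frontier_tract (hf : Continuous f) (hr : 0 < r)
    (hz : z ∈ frontier (σ.tract r)) : dist (f z) σ.pt = r := by
  rw [(σ.isOpen_tract hf hr).frontier_eq] at hz
  exact (dist_le_of_mem_closure_tract hf hr hz.1).eq_of_not_lt fun h =>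
    hz.2 (mem_S_of_mem_closure isOpen_ball (mem_ball_self hr) hz.1 h)

variable (σ)

theorem closure_tract_subset_tract (hf : Continuous f) (hr : 0 < r) (hrs : r < s) :
    closure (σ.tract r) ⊆ σ.tract s := fun _ hz =>
  mem_S_of_mem_closure isOpen_ball (mem_ball_self (hr.trans hrs))
    (closure_mono (σ.tract_subset_tract hr hrs.le) hz)
    ((dist_le_of_mem_closure_tract hf hr hz).trans_lt hrs)

theorem eventually_tract_subset_S (hV : IsOpen V) (hσV : σ.pt ∈ V) :
    ∀ᶠ r in 𝓝[>] 0, σ.tract r ⊆ σ.S V := by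
  obtain ⟨δ, hδ, hball⟩ := Metric.isOpen_iff.1 hV _ hσV
  filter_upwards [Ioo_mem_nhdsGT hδ] with r hr
  exact σ.tract_subset_S hr.1 hV ((ball_subset_ball hr.2.le).trans hball)

theorem iInter_closure_tract (hf : Continuous f) : ⋂ r : Ioi (0 : ℝ), closure (σ.tract r) = ∅ := by
  refine subset_eq_empty (fun z hz => ?_) σ.empty
  rw [mem_iInter] at hz
  have hfz : f z = σ.pt := dist_le_zero.1 <| le_of_forall_pos_le_add fun r hr => by
    simpa using dist_le_of_mem_closure_tract hf hr (hz ⟨r, hr⟩)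
  refine mem_iInter₂.2 fun V ⟨hV, hσV⟩ => ?_
  obtain ⟨r, hrV, hr⟩ := ((σ.eventually_tract_subset_S hV hσV).and self_mem_nhdsWithin).exists
  exact mem_S_of_mem_closure hV hσV (closure_mono hrV (hz ⟨r, hr⟩)) (hfz ▸ hσV)

theorem eventually_forall_mem_tract_lt_norm (hf : Continuous f) (K : ℝ) :
    ∀ᶠ r in 𝓝[>] 0, ∀ z ∈ σ.tract r, K < ‖z‖ := by
  have hmono : Monotone fun r : Ioi (0 : ℝ) => closure (σ.tract r) := fun r _ hrs =>
    closure_mono (σ.tract_subset_tract r.2 hrs)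
  obtain ⟨⟨r, hr⟩, hdisj⟩ := (isCompact_closedBall (0 : ℂ) K).elim_directed_family_closed
    (fun r : Ioi (0 : ℝ) => closure (σ.tract r)) (fun _ => isClosed_closure)
    (by rw [σ.iInter_closure_tract hf, inter_empty]) hmono.directed_ge
  filter_upwards [Ioc_mem_nhdsGT hr] with s hs z hz
  have hzr : z ∈ closure (σ.tract r) := subset_closure (σ.tract_subset_tract hs.1 hs.2 hz)
  exact not_le.1 fun h => (Set.ext_iff.1 hdisj z).1 ⟨mem_closedBall_zero_iff.2 h, hzr⟩

variable {σ} in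
theorem _root_.FinSingDistinct.eventually_disjoint_tract {τ : TranscSingOverFin f}
    (h : FinSingDistinct σ τ) :
    ∀ᶠ r in 𝓝[>] 0, Disjoint (σ.tract r) (τ.tract r) := by
  obtain ⟨V, W, hV, hσV, hW, hτW, hVW⟩ := h
  filter_upwards [σ.eventually_tract_subset_S hV hσV, τ.eventually_tract_subset_S hW hτW] with
    r hrV hrW
  exact (disjoint_iff_inter_eq_empty.2 hVW).mono hrV hrW

theorem eventually_forall_notMem_tract_of_lt_norm (hr : 0 < r) :
    ∀ᶠ R in atTop, ∀ z, R < ‖f z‖ → z ∉ σ.tract r := by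
  filter_upwards [eventually_ge_atTop (r + ‖σ.pt‖)] with R hR z hz hzr
  have hdist := dist_lt_of_mem_tract hr hzr
  rw [dist_eq_norm] at hdist
  linarith [norm_sub_norm_le (f z) σ.pt]

theorem exists_lt_norm (σ : TranscSingOverFin f) (hf : Differentiable ℂ f) (R : ℝ) :
    ∃ z, R < ‖f z‖ := by
  by_contra! hle
  obtain ⟨c, hc⟩ := hf.exists_const_forall_eq_of_bounded
    (isBounded_iff_forall_norm_le.2 ⟨R, forall_mem_range.2 hle⟩)
  refine (Set.ext_iff.1 σ.empty 0).1 (mem_iInter₂.2 fun V ⟨hV, hσV⟩ => ?_)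
  obtain ⟨z, hz, hS⟩ := σ.comp V hV hσV
  have huniv : f ⁻¹' V = univ := eq_univ_of_forall fun w => by
    rw [mem_preimage, hc w, ← hc z]
    exact hz
  rw [hS, huniv, connectedComponentIn_univ, PreconnectedSpace.connectedComponent_eq_univ]
  trivial

theorem exists_isLogBranchOn_one_sub_div_compl_tract (hf : Continuous f) (hr : 0 < r) :
    ∃ w ≠ 0, ∃ θ, IsLogBranchOn θ (1 - · / w) (σ.tract r)ᶜ := by
  obtain ⟨u, hu, humem, hulim⟩ := exists_seq_strictAnti_tendsto' hr
  have hulim' : Tendsto u atTop (𝓝[>] 0) :=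
    tendsto_nhdsWithin_iff.2 ⟨hulim, .of_forall fun n => (humem n).1⟩
  obtain ⟨φ, hφ, hnorm⟩ := extraction_forall_of_eventually fun n : ℕ =>
    hulim'.eventually (σ.eventually_forall_mem_tract_lt_norm hf n)
  have hpos : ∀ n, 0 < u (φ n) := fun n => (humem _).1
  obtain ⟨w, hw, θ, hθ⟩ := exists_isLogBranchOn_one_sub_div
    (fun n => σ.isOpen_tract hf (hpos n)) (fun n => σ.isPreconnected_tract (hpos n))
    (fun n => σ.tract_nonempty (hpos n))
    (fun m n h => σ.tract_subset_tract (hpos n) (hu.antitone (hφ.monotone h))) hnorm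
  exact ⟨w, norm_pos_iff.1 (by simpa using hnorm 0 w hw), θ,
    hθ.mono (compl_subset_compl.2 (σ.tract_subset_tract (hpos 0) (humem _).2.le))⟩

theorem exists_eventually_isLogBranchOn_id (hf : Continuous f) (hr : 0 < r) :
    ∃ θ, ∀ᶠ ρ in atTop, IsLogBranchOn θ id ({z | ρ < ‖z‖} \ σ.tract r) := by
  obtain ⟨w, hw, θ, hθ⟩ := σ.exists_isLogBranchOn_one_sub_div_compl_tract hf hr
  refine ⟨fun z => θ z - Complex.log (1 - w / z) + Complex.log (-w), ?_⟩
  filter_upwards [eventually_ge_atTop ‖w‖] with ρ hρ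
  have hne : ∀ z ∈ {z : ℂ | ρ < ‖z‖}, z ≠ 0 := fun z hz =>
    norm_pos_iff.1 ((norm_nonneg w).trans_lt (hρ.trans_lt hz))
  have hlog : IsLogBranchOn (fun z => Complex.log (1 - w / z)) (fun z => 1 - w / z)
      {z | ρ < ‖z‖} :=
    .clog (continuousOn_const.sub (continuousOn_const.div continuousOn_id hne)) fun z hz =>
      one_sub_div_mem_slitPlane (hρ.trans_lt hz)
  refine (((hθ.mono fun z hz => hz.2).sub (hlog.mono sdiff_subset)).add
    (.const (neg_ne_zero.2 hw))).congr_right fun z hz => ?_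
  have hz0 := hne z hz.1
  have hzw : z - w ≠ 0 := sub_ne_zero.2 fun h => (hρ.trans_lt hz.1).ne' (h ▸ rfl)
  simp only [one_sub_div hw, one_sub_div hz0, id]
  field_simp
  ring

end TranscSingOverFin

section Family

variable {ι : Type*} [Fintype ι] {f : ℂ → ℂ}

/-- Radii `s < r` that separate finitely many singularities: their tracts at radius `r` are
disjoint, and on the tracts at the smaller radius `s` the product `∏ k, (f z - (σ k).pt)` stays
below half of the lower bound `r ^ card ι` that it has on the boundaries of the tracts at
radius `r`. -/
structure SeparatingRadii (σ : ι → TranscSingOverFin f) (s r : ℝ) : Prop where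
  pos : 0 < s
  lt : s < r
  disjoint : Pairwise fun j k => Disjoint ((σ j).tract r) ((σ k).tract r)
  pt_eq_or_le_dist : ∀ j k, (σ j).pt = (σ k).pt ∨ 2 * r ≤ dist (σ j).pt (σ k).pt
  norm_prod_lt : ∀ j w, dist w (σ j).pt ≤ s →
    ‖∏ k, (w - (σ k).pt)‖ < r ^ Fintype.card ι / 2

theorem exists_separatingRadii {σ : ι → TranscSingOverFin f}
    (hσ : Pairwise fun j k => FinSingDistinct (σ j) (σ k)) : ∃ s r, SeparatingRadii σ s r := by
  have hdisj : ∀ᶠ r in 𝓝[>] (0 : ℝ), ∀ j k, j ≠ k → Disjoint ((σ j).tract r) ((σ k).tract r) :=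
    eventually_all.2 fun j => eventually_all.2 fun k => eventually_imp_distrib_left.2 fun hjk =>
      (hσ hjk).eventually_disjoint_tract
  have hdist : ∀ᶠ r in 𝓝[>] (0 : ℝ), ∀ j k,
      (σ j).pt = (σ k).pt ∨ 2 * r ≤ dist (σ j).pt (σ k).pt := by
    refine eventually_all.2 fun j => eventually_all.2 fun k =>
      eventually_or_distrib_left.2 (or_iff_not_imp_left.2 fun hjk => ?_)
    filter_upwards [Ioo_mem_nhdsGT (half_pos (dist_pos.2 hjk))] with r hr
    linarith [hr.2]
  obtain ⟨r, ⟨hrdisj, hrdist⟩, hr : 0 < r⟩ :=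
    ((hdisj.and hdist).and self_mem_nhdsWithin).exists
  have hprod : ∀ᶠ s in 𝓝[>] (0 : ℝ), ∀ j w, dist w (σ j).pt ≤ s →
      ‖∏ k, (w - (σ k).pt)‖ < r ^ Fintype.card ι / 2 := by
    refine eventually_all.2 fun j => ?_
    have hzero : ‖∏ k, ((σ j).pt - (σ k).pt)‖ < r ^ Fintype.card ι / 2 := by
      rw [Finset.prod_eq_zero (Finset.mem_univ j) (sub_self _), norm_zero]
      positivity
    have hcont : Continuous fun w : ℂ => ‖∏ k, (w - (σ k).pt)‖ := by fun_prop
    obtain ⟨δ, hδ, hball⟩ := Metric.eventually_nhds_iff.1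
      (hcont.continuousAt.eventually_lt_const hzero)
    filter_upwards [Ioo_mem_nhdsGT hδ] with s hs w hw
    exact hball (hw.trans_lt hs.2)
  obtain ⟨s, hsprod, hs⟩ := (hprod.and (Ioo_mem_nhdsGT hr)).exists
  exact ⟨s, r, hs.1, hs.2, fun j k hjk => hrdisj j k hjk, hrdist, hsprod⟩

namespace SeparatingRadii

variable {σ : ι → TranscSingOverFin f} {s r : ℝ} {i j k : ι} {z w : ℂ}

theorem pos_right (h : SeparatingRadii σ s r) : 0 < r :=
  h.pos.trans h.lt

theorem pow_card_le_norm_prod (h : SeparatingRadii σ s r) (hw : dist w (σ j).pt = r) :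
    r ^ Fintype.card ι ≤ ‖∏ k, (w - (σ k).pt)‖ := by
  have hfactor : ∀ k, r ≤ ‖w - (σ k).pt‖ := fun k => by
    rw [← dist_eq_norm]
    rcases h.pt_eq_or_le_dist j k with hjk | hjk
    · rw [← hjk, hw]
    · linarith [dist_triangle_left (σ j).pt (σ k).pt w]
  rw [norm_prod, ← Finset.card_univ, ← Finset.prod_const]
  exact Finset.prod_le_prod (fun _ _ => h.pos_right.le) fun k _ => hfactor k

theorem notMem_closure_tract_of_le_norm_prod (h : SeparatingRadii σ s r) (hf : Continuous f)
    (hz : r ^ Fintype.card ι / 2 ≤ ‖∏ k, (f z - (σ k).pt)‖) (j : ι) :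
    z ∉ closure ((σ j).tract s) := fun hj =>
  (h.norm_prod_lt j _ (TranscSingOverFin.dist_le_of_mem_closure_tract hf h.pos hj)).not_ge hz

theorem notMem_closure_tract_of_mem_closure (h : SeparatingRadii σ s r) (hf : Continuous f)
    (hjk : j ≠ k) (hz : z ∈ closure ((σ k).tract r)) : z ∉ closure ((σ j).tract s) := fun hj =>
  disjoint_left.1 ((h.disjoint hjk).closure_right ((σ j).isOpen_tract hf h.pos_right))
    ((σ j).closure_tract_subset_tract hf h.pos h.lt hj) hz

theorem notMem_closure_tract_of_notMem (h : SeparatingRadii σ s r) (hf : Continuous f)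
    (hz : z ∉ (σ j).tract r) : z ∉ closure ((σ j).tract s) := fun hj =>
  hz ((σ j).closure_tract_subset_tract hf h.pos h.lt hj)

theorem notMem_closure_tract_of_mem_frontier (h : SeparatingRadii σ s r) (hf : Continuous f)
    (hz : z ∈ frontier ((σ k).tract r)) (j : ι) : z ∉ closure ((σ j).tract s) := by
  rw [((σ k).isOpen_tract hf h.pos_right).frontier_eq] at hz
  rcases eq_or_ne j k with rfl | hjk
  · exact h.notMem_closure_tract_of_notMem hf hz.2
  · exact h.notMem_closure_tract_of_mem_closure hf hjk hz.1

variable {θ : ι → ℂ → ℂ} {ρ R : ℝ} {m : ι → ℂ}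

theorem eventually_dotProduct_logDiff_eq_zero (h : SeparatingRadii σ s r) (hf : Differentiable ℂ f)
    (hθ : ∀ j, IsLogBranchOn (θ j) id ({z | ρ < ‖z‖} \ (σ j).tract s))
    (hm : ∀ z, R < ‖f z‖ → m ⬝ᵥ logDiff θ i z = 0) :
    ∀ᶠ z in cobounded ℂ, r ^ Fintype.card ι ≤ ‖∏ k, (f z - (σ k).pt)‖ →
      m ⬝ᵥ logDiff θ i z = 0 := by
  have hrp : 0 < r ^ Fintype.card ι := pow_pos h.pos_right _
  have hprod : Continuous fun w => ∏ k, (w - (σ k).pt) := by fun_prop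
  obtain ⟨M, hM⟩ := (eventually_forall_lt_norm_of_lt_norm hprod R).exists
  have hcl : ∀ z, r ^ Fintype.card ι / 2 ≤ ‖∏ k, (f z - (σ k).pt)‖ → ∀ j,
      z ∉ closure ((σ j).tract s) := fun z => h.notMem_closure_tract_of_le_norm_prod hf.continuous
  refine eventually_eq_zero_of_le_norm (by fun_prop) (half_pos hrp) (half_lt_self hrp)
    ((hθ i).mono fun z hz => ⟨hz.1, fun hzi => hcl z hz.2 i (subset_closure hzi)⟩)
    (fun z hzρ hz => ?_) fun z hz => hm z (hM _ hz)
  filter_upwards [eventually_logDiff_eq hθ (fun j => diff_mem_nhds_of_lt_norm hzρ (hcl z hz j)) i]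
    with w hw
  rw [hw]

theorem coeff_eq_zero (h : SeparatingRadii σ s r) (hf : Continuous f)
    (hθ : ∀ j, IsLogBranchOn (θ j) id ({z | ρ < ‖z‖} \ (σ j).tract s)) (hij : i ≠ j)
    (hm : ∀ᶠ z in cobounded ℂ, r ^ Fintype.card ι ≤ ‖∏ k, (f z - (σ k).pt)‖ →
      m ⬝ᵥ logDiff θ i z = 0) : m j = 0 := by
  classical
  by_contra hmj
  refine not_eventually_hasDerivAt_inv (((σ j).tract r).piecewise
    (fun z => θ j z - (m j)⁻¹ * m ⬝ᵥ logDiff θ i z) (θ j)) ?_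
  filter_upwards [hm, tendsto_norm_cobounded_atTop.eventually_gt_atTop ρ] with z hmz hzρ
  have hderiv : ∀ k, z ∉ closure ((σ k).tract s) → HasDerivAt (θ k) z⁻¹ z := fun k hk =>
    (hθ k).hasDerivAt_id (diff_mem_nhds_of_lt_norm hzρ hk)
  refine hasDerivAt_piecewise ((σ j).isOpen_tract hf h.pos_right)
    (fun hz => hasDerivAt_sub_dotProduct_logDiff hij hmj fun k hk =>
      hderiv k (h.notMem_closure_tract_of_mem_closure hf hk (subset_closure hz)))
    (fun hz => hderiv j (h.notMem_closure_tract_of_notMem hf hz)) fun hz => ?_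
  have hzero := hmz (h.pow_card_le_norm_prod
    (TranscSingOverFin.dist_eq_of_mem_frontier_tract hf h.pos_right hz))
  filter_upwards [eventually_logDiff_eq hθ (fun k => diff_mem_nhds_of_lt_norm hzρ
    (h.notMem_closure_tract_of_mem_frontier hf hz k)) i] with w hw
  rw [hw, hzero, mul_zero, sub_zero]

theorem eq_zero_of_dotProduct_logDiff_eq_zero (h : SeparatingRadii σ s r)
    (hf : Differentiable ℂ f)
    (hθ : ∀ j, IsLogBranchOn (θ j) id ({z | ρ < ‖z‖} \ (σ j).tract s))
    (hm : ∀ z, R < ‖f z‖ → m ⬝ᵥ logDiff θ i z = 0) : m = 0 := by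
  have hne : ∀ j, i ≠ j → m j = 0 := fun j hij =>
    h.coeff_eq_zero hf.continuous hθ hij (h.eventually_dotProduct_logDiff_eq_zero hf hθ hm)
  obtain ⟨z, hz⟩ := (σ i).exists_lt_norm hf R
  have hi : m i = 0 := by
    have hzero := hm z hz
    rw [dotProduct, Finset.sum_eq_single i (fun j _ hji => by rw [hne j hji.symm, zero_mul])
      fun hi => absurd (Finset.mem_univ i) hi, logDiff, sub_self, zero_add, mul_one] at hzero
    exact hzero
  funext j
  rcases eq_or_ne i j with rfl | hij
  exacts [hi, hne j hij]

end SeparatingRadii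

theorem exists_pairwise_notMem_connectedComponentIn {κ : Type*} [Finite κ] [Nonempty κ]
    (hf : Differentiable ℂ f)
    {σ : κ → TranscSingOverFin f} (hσ : Pairwise fun j k => FinSingDistinct (σ j) (σ k)) :
    ∃ R > 0, ∃ z : κ → ℂ, (∀ j, R < ‖f (z j)‖) ∧
      Pairwise fun j k => z k ∉ connectedComponentIn {w | R < ‖f w‖} (z j) := by
  cases nonempty_fintype κ
  obtain ⟨s, r, h⟩ := exists_separatingRadii hσ
  choose θ hθ using fun j => (σ j).exists_eventually_isLogBranchOn_id hf.continuous h.pos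
  obtain ⟨ρ, hρ⟩ := (eventually_all.2 hθ).exists
  obtain ⟨R, ⟨hRρ, hRs⟩, hR⟩ :=
    (((eventually_forall_lt_norm_of_lt_norm hf.continuous ρ).and
      (eventually_all.2 fun j => (σ j).eventually_forall_notMem_tract_of_lt_norm h.pos)).and
        (eventually_gt_atTop 0)).exists
  let i : κ := Classical.arbitrary κ
  obtain ⟨v⟩ := nonempty_embedding_of_forall_dotProduct_eq_zero
    (s := logDiff θ i '' {z | R < ‖f z‖}) fun m hm =>
      h.eq_zero_of_dotProduct_logDiff_eq_zero hf hρ fun z hz => hm _ (mem_image_of_mem _ hz)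
  choose z hzR hzv using fun j => (v j).2
  refine ⟨R, hR, z, hzR, fun j k hjk hmem => hjk (v.injective (Subtype.ext ?_))⟩
  rw [← hzv, ← hzv]
  have hsub := connectedComponentIn_subset {w | R < ‖f w‖} (z j)
  exact logDiff_eq_of_isPreconnected
    (fun l => (hρ l).mono fun w hw => ⟨hRρ w (hsub hw), hRs l w (hsub hw)⟩)
    isPreconnected_connectedComponentIn (mem_connectedComponentIn (hzR j)) hmem i

theorem exists_pairwise_infSingDistinct {κ : Type*} [Finite κ] (hf : Differentiable ℂ f)
    {σ : κ → TranscSingOverFin f} (hσ : Pairwise fun j k => FinSingDistinct (σ j) (σ k)) :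
    ∃ τ : κ → TranscSingOverInf f, Pairwise fun j k => InfSingDistinct (τ j) (τ k) := by
  rcases isEmpty_or_nonempty κ with _ | ⟨⟨j₀⟩⟩
  · exact ⟨isEmptyElim, fun j => isEmptyElim j⟩
  have : Nonempty κ := ⟨j₀⟩
  obtain ⟨R, hR, z, hzR, hz⟩ := exists_pairwise_notMem_connectedComponentIn hf hσ
  choose τ hτ using fun j => exists_transcSingOverInf_T_eq hf ((σ j₀).exists_lt_norm hf) hR (hzR j)
  refine ⟨τ, fun j k hjk => ⟨R, ?_⟩⟩
  rw [hτ, hτ]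
  by_contra! hne
  obtain ⟨y, hyj, hyk⟩ := hne
  apply hz hjk
  rw [connectedComponentIn_eq hyj, ← connectedComponentIn_eq hyk]
  exact mem_connectedComponentIn (hzR k)

end Family

end

/-- If an entire function `f` has at least `p ≥ 2` pairwise distinct
transcendental singularities of `f⁻¹` over finite points, then `f⁻¹` has at
least `p` pairwise distinct transcendental singularities over `∞`.
Consequently (granting the Denjoy–Carleman–Ahlfors theorem, taken here as the
hypothesis `hDCA`), the number of finite asymptotic values of an entire
function of lower order `λ(f) ≥ 1/2` is at most `2λ(f)`. -/
theorem stmt_14 (f : ℂ → ℂ) (hf : Differentiable ℂ f)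
    (p : ℕ) (hp : 2 ≤ p)
    (σ : Fin p → TranscSingOverFin f)
    (hdist : ∀ j k, j ≠ k → FinSingDistinct (σ j) (σ k)) :
    (∃ τ : Fin p → TranscSingOverInf f,
      ∀ j k, j ≠ k → InfSingDistinct (τ j) (τ k)) ∧
    (Function.Injective (fun j => (σ j).pt) →
      (1 / 2 : ℝ) ≤ lowerOrder f →
      -- Denjoy–Carleman–Ahlfors: at most `2λ(f)` pairwise distinct direct
      -- singularities over `∞`:
      (∀ q : ℕ, (∃ τ : Fin q → TranscSingOverInf f,
          ∀ j k, j ≠ k → InfSingDistinct (τ j) (τ k)) →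
        (q : ℝ) ≤ 2 * lowerOrder f) →
      (p : ℝ) ≤ 2 * lowerOrder f) := by
  obtain ⟨τ, hτ⟩ := exists_pairwise_infSingDistinct hf hdist
  exact ⟨⟨τ, hτ⟩, fun _ _ hDCA => hDCA p ⟨τ, hτ⟩⟩
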